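/- Lemma B.6 (existence and uniqueness of the extension of a morphism to a morphism of triangles): Let D be a triangulated category equipped with a slicing P. Let E and F be nonzero objects of D, let ψ be a real number, and let E' → E → E'' → E'⟦1⟧ and F' → F → F'' → F'⟦1⟧ be distinguished triangles. Suppose E', E'', F', F'' admit HN filtrations whose sets of phases satisfy φ⁻(E') > ψ ≥ φ⁺(E'') and φ⁻(F') > ψ ≥ φ⁺(F''), where φ⁻ denotes the lowest and φ⁺ the highest phase occurring in the respective filtration. Then every morphism f : E → F extends uniquely to a morphism of triangles (f', f, f''): there exist unique f' : E' → F' and f'' : E'' → F'' making the three squares of the two triangles commute. Moreover, if f is an isomorphism, then f' and f'' are isomorphisms as well. -/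

import Mathlib

open CategoryTheory Category Limits Pretriangulated

universe v u

variable {D : Type u} [Category.{v} D] [Preadditive D] [HasZeroObject D]
  [HasShift D ℤ] [∀ n : ℤ, (shiftFunctor D n).Additive] [Pretriangulated D]

/-- A Harder–Narasimhan filtration of an object `E` with respect to a family
of classes of objects `P : ℝ → Set D`:  an integer `n ≥ 1`, objects
`0 = filtObj 0, filtObj 1, …, filtObj n = E`, nonzero semistable factors
`factor j ∈ P (phase j)` for `1 ≤ j ≤ n`, strictly decreasing phases
`phase 1 > phase 2 > … > phase n`, and distinguished triangles
`filtObj (j-1) ⟶ filtObj j ⟶ factor j ⟶ (filtObj (j-1))⟦1⟧`. -/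
structure HNFiltration (P : ℝ → Set D) (E : D) where
  n : ℕ
  one_le_n : 1 ≤ n
  filtObj : ℕ → D
  factor : ℕ → D
  phase : ℕ → ℝ
  isZero_filtObj_zero : IsZero (filtObj 0)
  filtObj_n : filtObj n = E
  phase_strictAnti : ∀ j, 1 ≤ j → j < n → phase (j + 1) < phase j
  factor_nonzero : ∀ j, 1 ≤ j → j ≤ n → ¬ IsZero (factor j)
  factor_mem : ∀ j, 1 ≤ j → j ≤ n → factor j ∈ P (phase j)
  triangle : ∀ j, 1 ≤ j → j ≤ n →
    ∃ (f : filtObj (j - 1) ⟶ filtObj j) (g : filtObj j ⟶ factor j)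
      (h : factor j ⟶ (filtObj (j - 1))⟦(1 : ℤ)⟧),
        Triangle.mk f g h ∈ distTriang D

/-- A slicing on a (pre)triangulated category `D`:  for each real number `φ`
a class `P φ` of objects (the semistable objects of phase `φ`), closed under
isomorphism, containing the zero objects and closed under finite direct sums,
such that (A2) `P (φ + 1) = P φ ⟦1⟧`, (A3) there are no nonzero morphisms from
semistables of bigger phase to semistables of smaller phase, and (A4) every
nonzero object admits a Harder–Narasimhan filtration. -/
structure Slicing (D : Type u) [Category.{v} D] [Preadditive D] [HasZeroObject D]
    [HasShift D ℤ] [∀ n : ℤ, (shiftFunctor D n).Additive] [Pretriangulated D] where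
  P : ℝ → Set D
  mem_of_iso : ∀ (φ : ℝ) (X Y : D), (X ≅ Y) → X ∈ P φ → Y ∈ P φ
  zero_mem : ∀ (φ : ℝ) (X : D), IsZero X → X ∈ P φ
  sum_mem : ∀ (φ : ℝ) (X Y : D) (b : BinaryBicone X Y), b.IsBilimit →
    X ∈ P φ → Y ∈ P φ → b.pt ∈ P φ
  shift_mem : ∀ (φ : ℝ) (X : D), X ∈ P (φ + 1) ↔ ∃ Y ∈ P φ, Nonempty (X ≅ Y⟦(1 : ℤ)⟧)
  hom_zero : ∀ (φ₁ φ₂ : ℝ), φ₂ < φ₁ → ∀ (A₁ A₂ : D), A₁ ∈ P φ₁ → A₂ ∈ P φ₂ →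
    ∀ f : A₁ ⟶ A₂, f = 0
  hn_exists : ∀ E : D, ¬ IsZero E → Nonempty (HNFiltration P E)

theorem aux_phase_le (P : ℝ → Set D) {X : D} (G : HNFiltration P X) (j : ℕ) (hj : 1 ≤ j)
    (hn : j ≤ G.n) : G.phase j ≤ G.phase 1 := by
  induction j, hj using Nat.le_induction with
  | base => exact le_rfl
  | succ k hk ih => exact (G.phase_strictAnti k hk (by omega)).le.trans (ih (by omega))

theorem aux_le_phase (P : ℝ → Set D) {X : D} (G : HNFiltration P X) (j : ℕ) (hj : 1 ≤ j)
    (hn : j ≤ G.n) : G.phase G.n ≤ G.phase j := by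
  have key : ∀ m, j ≤ m → m ≤ G.n → G.phase m ≤ G.phase j := by
    intro m hm
    induction m, hm using Nat.le_induction with
    | base => intro _; exact le_rfl
    | succ k hk ih =>
      intro h
      exact (G.phase_strictAnti k (by omega) (by omega)).le.trans (ih (by omega))
  exact key _ hn le_rfl

/-- No maps from a semistable object to an object with smaller phases. -/
theorem aux_hom_zero_left (S : Slicing D) {A Y : D} {φ : ℝ} (hA : A ∈ S.P φ)
    (G : HNFiltration S.P Y) (h : G.phase 1 < φ) (f : A ⟶ Y) : f = 0 := by
  have key : ∀ j, j ≤ G.n → ∀ f : A ⟶ G.filtObj j, f = 0 := by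
    intro j
    induction j with
    | zero => intro _ f; exact G.isZero_filtObj_zero.eq_of_tgt _ _
    | succ k ih =>
      intro hk f
      obtain ⟨a, b, c, hT⟩ := G.triangle (k + 1) (by omega) hk
      have h0 : f ≫ b = 0 :=
        S.hom_zero φ _ (lt_of_le_of_lt (aux_phase_le _ G (k + 1) (by omega) hk) h) _ _ hA
          (G.factor_mem (k + 1) (by omega) hk) _
      obtain ⟨g, hg⟩ := Triangle.coyoneda_exact₂ _ hT f h0
      have hg0 : g = 0 := ih (by omega) g
      rw [hg, hg0, zero_comp]
      rfl
  have key' := key G.n le_rfl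
  rw [G.filtObj_n] at key'
  exact key' f

theorem aux_hom_zero (S : Slicing D) {X Y : D} (GX : HNFiltration S.P X)
    (GY : HNFiltration S.P Y) (h : GY.phase 1 < GX.phase GX.n) (f : X ⟶ Y) : f = 0 := by
  have key : ∀ j, j ≤ GX.n → ∀ f : GX.filtObj j ⟶ Y, f = 0 := by
    intro j
    induction j with
    | zero => intro _ f; exact GX.isZero_filtObj_zero.eq_of_src _ _
    | succ k ih =>
      intro hk f
      obtain ⟨a, b, c, hT⟩ := GX.triangle (k + 1) (by omega) hk
      have h0 : a ≫ f = 0 := ih (by omega) _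
      obtain ⟨g, hg⟩ := Triangle.yoneda_exact₂ _ hT f h0
      have hg0 : g = 0 := aux_hom_zero_left S (GX.factor_mem (k + 1) (by omega) hk) GY
          (lt_of_lt_of_le h (aux_le_phase _ GX (k + 1) (by omega) hk)) g
      rw [hg, hg0, comp_zero]
      rfl
  have key' := key GX.n le_rfl
  rw [GX.filtObj_n] at key'
  exact key' f

theorem aux_hom_shift_zero (S : Slicing D) {X Y : D} (GX : HNFiltration S.P X)
    (GY : HNFiltration S.P Y) (h : GY.phase 1 < GX.phase GX.n) (f : X⟦(1 : ℤ)⟧ ⟶ Y) :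
    f = 0 := by
  have key : ∀ j, j ≤ GX.n → ∀ f : (GX.filtObj j)⟦(1 : ℤ)⟧ ⟶ Y, f = 0 := by
    intro j
    induction j with
    | zero =>
      intro _ f
      exact ((shiftFunctor D (1 : ℤ)).map_isZero GX.isZero_filtObj_zero).eq_of_src _ _
    | succ k ih =>
      intro hk f
      obtain ⟨a, b, c, hT⟩ := GX.triangle (k + 1) (by omega) hk
      have hT3 := rot_of_distTriang _ (rot_of_distTriang _ (rot_of_distTriang _ hT))
      have h0 : (-a⟦(1 : ℤ)⟧') ≫ f = 0 := ih (by omega) _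
      obtain ⟨g, hg⟩ := Triangle.yoneda_exact₂ _ hT3 f h0
      have hg0 : g = 0 := by
        refine aux_hom_zero_left S (φ := GX.phase (k + 1) + 1)
          ((S.shift_mem _ _).2 ⟨_, GX.factor_mem (k + 1) (by omega) hk, ⟨Iso.refl _⟩⟩) GY ?_ g
        have := aux_le_phase _ GX (k + 1) (by omega) hk
        linarith
      rw [hg, hg0, comp_zero]
      rfl
  have key' := key GX.n le_rfl
  rw [GX.filtObj_n] at key'
  exact key' f

theorem aux_unique₁ {E' E F' F F'' : D} {uE : E' ⟶ E}
    {uF : F' ⟶ F} {vF : F ⟶ F''} {wF : F'' ⟶ F'⟦(1 : ℤ)⟧}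
    (hTF : Triangle.mk uF vF wF ∈ distTriang D)
    (h1 : ∀ g : E'⟦(1 : ℤ)⟧ ⟶ F'', g = 0) {f : E ⟶ F} {a b : E' ⟶ F'}
    (ha : uE ≫ f = a ≫ uF) (hb : uE ≫ f = b ≫ uF) : a = b := by
  have hd : (a - b) ≫ uF = 0 := by rw [Preadditive.sub_comp, ← ha, ← hb, sub_self]
  obtain ⟨g, hg⟩ := Triangle.coyoneda_exact₁ _ hTF ((a - b)⟦(1 : ℤ)⟧') (by
    change (a - b)⟦(1 : ℤ)⟧' ≫ uF⟦(1 : ℤ)⟧' = 0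
    rw [← Functor.map_comp, hd, Functor.map_zero])
  have hg0 : g = 0 := h1 g
  rw [hg0, zero_comp] at hg
  exact sub_eq_zero.1 ((Functor.map_eq_zero_iff (shiftFunctor D (1 : ℤ))).1 hg)

theorem aux_unique₂ {E' E E'' F F'' : D} {uE : E' ⟶ E} {vE : E ⟶ E''}
    {wE : E'' ⟶ E'⟦(1 : ℤ)⟧} {vF : F ⟶ F''}
    (hTE : Triangle.mk uE vE wE ∈ distTriang D)
    (h1 : ∀ g : E'⟦(1 : ℤ)⟧ ⟶ F'', g = 0) {f : E ⟶ F} {a b : E'' ⟶ F''}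
    (ha : vE ≫ a = f ≫ vF) (hb : vE ≫ b = f ≫ vF) : a = b := by
  have hd : vE ≫ (a - b) = 0 := by rw [Preadditive.comp_sub, ha, hb, sub_self]
  obtain ⟨g, hg⟩ := Triangle.yoneda_exact₃ _ hTE (a - b) hd
  have hg0 : g = 0 := h1 g
  rw [hg0, comp_zero] at hg
  exact sub_eq_zero.1 hg

theorem aux_exists {E' E E'' F' F F'' : D} {uE : E' ⟶ E} {vE : E ⟶ E''}
    {wE : E'' ⟶ E'⟦(1 : ℤ)⟧} {uF : F' ⟶ F} {vF : F ⟶ F''} {wF : F'' ⟶ F'⟦(1 : ℤ)⟧}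
    (hTE : Triangle.mk uE vE wE ∈ distTriang D) (hTF : Triangle.mk uF vF wF ∈ distTriang D)
    (h0 : ∀ g : E' ⟶ F'', g = 0) (f : E ⟶ F) :
    ∃ (a : E' ⟶ F') (c : E'' ⟶ F''),
      uE ≫ f = a ≫ uF ∧ vE ≫ c = f ≫ vF ∧ wE ≫ a⟦(1 : ℤ)⟧' = c ≫ wF := by
  obtain ⟨a, ha⟩ := Triangle.coyoneda_exact₂ _ hTF (uE ≫ f) (h0 _)
  obtain ⟨c, hc1, hc2⟩ := complete_distinguished_triangle_morphism _ _ hTE hTF a f ha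
  exact ⟨a, c, ha, hc1, hc2⟩

/-- Lemma B.6: given nonzero objects `E`, `F`, a real number `ψ`, distinguished
triangles `E' ⟶ E ⟶ E'' ⟶ E'⟦1⟧` and `F' ⟶ F ⟶ F'' ⟶ F'⟦1⟧` whose outer terms
admit HN filtrations with `φ⁻(E') > ψ ≥ φ⁺(E'')` and `φ⁻(F') > ψ ≥ φ⁺(F'')`,
every morphism `f : E ⟶ F` extends uniquely to a morphism of triangles
`(f', f, f'')`;  moreover, if `f` is an isomorphism then so are `f'` and `f''`. -/
theorem triangle_morphism_extension_unique [IsTriangulated D] (S : Slicing D)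
    {E' E E'' F' F F'' : D}
    (hE : ¬ IsZero E) (hF : ¬ IsZero F) (ψ : ℝ)
    (uE : E' ⟶ E) (vE : E ⟶ E'') (wE : E'' ⟶ E'⟦(1 : ℤ)⟧)
    (uF : F' ⟶ F) (vF : F ⟶ F'') (wF : F'' ⟶ F'⟦(1 : ℤ)⟧)
    (hTE : Triangle.mk uE vE wE ∈ distTriang D)
    (hTF : Triangle.mk uF vF wF ∈ distTriang D)
    (GE' : HNFiltration S.P E') (GE'' : HNFiltration S.P E'')
    (GF' : HNFiltration S.P F') (GF'' : HNFiltration S.P F'')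
    (hE₁ : GE'.phase GE'.n > ψ) (hE₂ : ψ ≥ GE''.phase 1)
    (hF₁ : GF'.phase GF'.n > ψ) (hF₂ : ψ ≥ GF''.phase 1) :
    ∀ f : E ⟶ F,
      (∃! p : (E' ⟶ F') × (E'' ⟶ F''),
        uE ≫ f = p.1 ≫ uF ∧ vE ≫ p.2 = f ≫ vF ∧
          wE ≫ p.1⟦(1 : ℤ)⟧' = p.2 ≫ wF) ∧
      (IsIso f → ∀ (f' : E' ⟶ F') (f'' : E'' ⟶ F''),
        (uE ≫ f = f' ≫ uF ∧ vE ≫ f'' = f ≫ vF ∧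
          wE ≫ f'⟦(1 : ℤ)⟧' = f'' ≫ wF) →
        IsIso f' ∧ IsIso f'') := by
  have lE : GE''.phase 1 < GE'.phase GE'.n := lt_of_le_of_lt hE₂ hE₁
  have lF : GF''.phase 1 < GF'.phase GF'.n := lt_of_le_of_lt hF₂ hF₁
  have lEF : GF''.phase 1 < GE'.phase GE'.n := lt_of_le_of_lt hF₂ hE₁
  have lFE : GE''.phase 1 < GF'.phase GF'.n := lt_of_le_of_lt hE₂ hF₁
  have sE := aux_hom_shift_zero S GE' GE'' lE
  have sF := aux_hom_shift_zero S GF' GF'' lF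
  have sEF := aux_hom_shift_zero S GE' GF'' lEF
  intro f
  refine ⟨?_, ?_⟩
  · obtain ⟨a, c, h1, h2, h3⟩ := aux_exists hTE hTF (aux_hom_zero S GE' GF'' lEF) f
    refine ⟨(a, c), ⟨h1, h2, h3⟩, ?_⟩
    rintro ⟨a', c'⟩ ⟨k1, k2, -⟩
    exact Prod.ext (aux_unique₁ hTF sEF k1 h1) (aux_unique₂ hTE sEF k2 h2)
  · rintro hf a c ⟨h1, h2, -⟩
    obtain ⟨b, d, k1, k2, -⟩ := aux_exists hTF hTE (aux_hom_zero S GF' GE'' lFE) (inv f)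
    refine ⟨⟨b, ?_, ?_⟩, ⟨d, ?_, ?_⟩⟩
    · refine aux_unique₁ (uE := uE) (f := 𝟙 E) hTE sE ?_ (by simp)
      rw [assoc, ← k1, ← assoc, ← h1]; simp
    · refine aux_unique₁ (uE := uF) (f := 𝟙 F) hTF sF ?_ (by simp)
      rw [assoc, ← h1, ← assoc, ← k1]; simp
    · refine aux_unique₂ (vF := vE) (f := 𝟙 E) hTE sE ?_ (by simp)
      rw [← assoc, h2, assoc, k2]; simp
    · refine aux_unique₂ (vF := vF) (f := 𝟙 F) hTF sF ?_ (by simp)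
      rw [← assoc, k2, assoc, h2]; simp
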